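/- Define ψ : R_X × (R_Y)^{r-1} → R_{X̃} by ψ(α, β_1, ..., β_{r-1}) = π^*(α) + ∑_{i=1}^{r-1} i_{E*}( h^{i-1} · π_E^*(β_i) ). Then for all α ∈ R_X and β_1, ..., β_{r-1} ∈ R_Y: (a) π_*(ψ(α, β_1, ..., β_{r-1})) = α, and (b) G_E^{-i}( i_E^*(ψ(α, β_1, ..., β_{r-1})) ) = β_i for every 1 ≤ i ≤ r-1. In other words, the map sending x ∈ R_{X̃} to (π_*(x), G_E^{-1}(i_E^*(x)), ..., G_E^{-(r-1)}(i_E^*(x))) is a left inverse of ψ. -/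

import Mathlib

/-- `Q r j` is the polynomial `P_{r-1-j}` of the downward recursion:
`P_{r-1} = (-1)^{r-1}` and for `0 ≤ i < r-1`,
`P_i = (-1)^r · ∑_{k=1}^{r-1-i} T_k · P_{k+i}`, where `T_k` is the
variable `MvPolynomial.X k`. -/
noncomputable def Q (r : ℕ) : ℕ → MvPolynomial ℕ ℤ
  | 0 => (-1) ^ (r - 1)
  | (j + 1) => (-1) ^ r * ∑ k ∈ Finset.range (j + 1), MvPolynomial.X (k + 1) * Q r (j - k)
  termination_by j => j
  decreasing_by omega

/-- The polynomial `P_i` in `ℤ[T_1, …, T_{r-1}]`. -/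
noncomputable def P (r i : ℕ) : MvPolynomial ℕ ℤ := Q r (r - 1 - i)

/-!
Put `s_n = π_{E*}(h^n)`. The recursion for the `P_i`, continued to all `i < 0`, says that
`∑_j P_{r-1-j} x^j` is the inverse of the power series `∑_k s_{r-1+k} x^k`. As `s_n = 0` for
`n < r - 1`, multiplying this inverse by `∑_n s_n x^n` gives `x^{r-1}`. Comparing coefficients shows
that `G_E^{-i}` extracts `c_i` from `∑_{l<r} h^l · π_E^*(c_l)`. By the self-intersection formula
`i_E^*(ψ(α, β)) = π_E^*(ι^*(α)) + ∑_{l≥1} h^l · π_E^*(β_l)`, so `G_E^{-i}` recovers `β_i`;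
and `π_*` kills the exceptional part of `ψ(α, β)` because only `h^0, …, h^{r-2}` occur there.
-/

section PowerSeriesInverse

open PowerSeries

variable {A : Type*} [CommRing A]

theorem aeval_Q_succ (r : ℕ) (t : ℕ → A) (m : ℕ) :
    MvPolynomial.aeval t (Q r (m + 1)) =
      (-1) ^ r * ∑ k ∈ Finset.range (m + 1), t (k + 1) * MvPolynomial.aeval t (Q r (m - k)) := by
  rw [Q]
  simp only [map_mul, map_pow, map_neg, map_one, map_sum, MvPolynomial.aeval_X]

theorem mk_mul_mk_aeval_Q {r : ℕ} (hr : 0 < r) {t : ℕ → A} (ht : t 0 = (-1) ^ (r - 1)) :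
    mk t * mk (fun m => MvPolynomial.aeval t (Q r m)) = 1 := by
  obtain ⟨r, rfl⟩ := Nat.exists_eq_add_of_le' (Nat.succ_le_of_lt hr)
  rw [Nat.add_sub_cancel] at ht
  have hsign : (-1 : A) ^ r * (-1) ^ r = 1 := by rw [← mul_pow]; simp
  ext m
  simp only [coeff_mul, coeff_mk, coeff_one]
  rw [Finset.Nat.sum_antidiagonal_eq_sum_range_succ
    (fun k l => t k * MvPolynomial.aeval t (Q (r + 1) l))]
  cases m with
  | zero => simpa [Q, ht] using hsign
  | succ m =>
    rw [Finset.sum_range_succ', Nat.sub_zero, aeval_Q_succ, ht, if_neg m.succ_ne_zero]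
    simp only [Nat.add_sub_add_right]
    linear_combination (-∑ k ∈ Finset.range (m + 1),
      t (k + 1) * MvPolynomial.aeval t (Q (r + 1) (m - k))) * hsign

theorem mk_eq_X_pow_mul_mk {n : ℕ} {s : ℕ → A} (hlow : ∀ m < n, s m = 0) :
    mk s = X ^ n * mk fun k => s (n + k) := by
  ext m
  rw [coeff_X_pow_mul', coeff_mk, coeff_mk]
  split_ifs with hm
  · rw [Nat.add_sub_cancel' hm]
  · exact hlow m (not_le.1 hm)

theorem sum_mul_eq_ite_of_mk_mul_mk_eq_one {n : ℕ} {s c : ℕ → A} (hlow : ∀ m < n, s m = 0)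
    (hinv : (mk fun k => s (n + k)) * mk c = 1) {i l : ℕ} (hi : i ≤ n) (hl : l ≤ n) :
    ∑ j ∈ Finset.range (n - i + 1), c (n - i - j) * s (j + l) = if l = i then 1 else 0 := by
  have hprod : mk s * mk c = X ^ n := by rw [mk_eq_X_pow_mul_mk hlow, mul_assoc, hinv, mul_one]
  have hcoeff := congrArg (coeff (l + (n - i))) hprod
  rw [coeff_mul, coeff_X_pow] at hcoeff
  simp only [coeff_mk] at hcoeff
  rw [Finset.Nat.sum_antidiagonal_eq_sum_range_succ (fun a b => s a * c b), Nat.succ_eq_add_one,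
    add_assoc, Finset.sum_range_add, Finset.sum_eq_zero, zero_add] at hcoeff
  · simp only [show l + (n - i) = n ↔ l = i by omega, Nat.add_sub_add_left] at hcoeff
    simpa only [mul_comm, add_comm] using hcoeff
  · intro m hm
    rw [hlow m ((Finset.mem_range.1 hm).trans_le hl), zero_mul]

theorem sum_aeval_P_mul {r : ℕ} (hr : 0 < r) {s : ℕ → A} (hlow : ∀ m < r - 1, s m = 0)
    (htop : s (r - 1) = (-1) ^ (r - 1)) {i l : ℕ} (hi : i ≤ r - 1) (hl : l ≤ r - 1) :
    ∑ j ∈ Finset.range (r - 1 - i + 1),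
      MvPolynomial.aeval (fun k => s (r - 1 + k)) (P r (i + j)) * s (j + l) =
        if l = i then 1 else 0 := by
  simp only [P, ← Nat.sub_sub _ i]
  exact sum_mul_eq_ite_of_mk_mul_mk_eq_one hlow (mk_mul_mk_aeval_Q hr htop) hi hl

end PowerSeriesInverse

section BlowUp

variable {RXt RX RY RE : Type*} [AddCommMonoid RXt] [AddCommMonoid RX] [CommRing RY]
  [CommSemiring RE]

/-- The operator `G_E^{-i} : R_E → R_Y`. For `i < r` it extracts the coefficient of `h^i` in the
decomposition of `R_E` given by the projective bundle formula, see `projBundleCoeff_pow_mul`. -/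
noncomputable def projBundleCoeff (r : ℕ) (πEpush : RE →+ RY) (h : RE) (i : ℕ) : RE →+ RY where
  toFun e := ∑ j ∈ Finset.range (r - 1 - i + 1),
    MvPolynomial.aeval (R := ℤ) (fun k => πEpush (h ^ (r - 1 + k))) (P r (i + j)) *
      πEpush (h ^ j * e)
  map_zero' := by simp only [mul_zero, map_zero, Finset.sum_const_zero]
  map_add' a b := by simp only [mul_add, map_add, Finset.sum_add_distrib]

/-- The map `ψ(α, β_1, …, β_{r-1})` of the blowup formula. Only the values of `β` at
`1, …, r - 1` matter. -/
def blowupMap (r : ℕ) (πpull : RX →+ RXt) (iEpush : RE →+ RXt) (πEpull : RY →+ RE) (h : RE)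
    (α : RX) (β : ℕ → RY) : RXt :=
  πpull α + ∑ l ∈ Finset.Icc 1 (r - 1), iEpush (h ^ (l - 1) * πEpull (β l))

variable {r : ℕ} {πpull : RX →+ RXt} {iEpull : RXt →+ RE} {πEpull : RY →+ RE} {ιpull : RX →+ RY}
  {πpush : RXt →+ RX} {πEpush : RE →+ RY} {iEpush : RE →+ RXt} {ιpush : RY →+ RX} {h : RE}

theorem projBundleCoeff_pow_mul (hr : 0 < r)
    (projE : ∀ (c : RY) (e : RE), πEpush (πEpull c * e) = c * πEpush e)
    (hlow : ∀ m < r - 1, πEpush (h ^ m) = 0) (htop : πEpush (h ^ (r - 1)) = (-1) ^ (r - 1))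
    {i l : ℕ} (hi : i ≤ r - 1) (hl : l ≤ r - 1) (c : RY) :
    projBundleCoeff r πEpush h i (h ^ l * πEpull c) = if l = i then c else 0 := by
  have hterm (j : ℕ) : πEpush (h ^ j * (h ^ l * πEpull c)) = πEpush (h ^ (j + l)) * c := by
    rw [← mul_assoc, ← pow_add, mul_comm, projE, mul_comm]
  change ∑ j ∈ Finset.range (r - 1 - i + 1), _ * πEpush (h ^ j * (h ^ l * πEpull c)) = _
  simp_rw [hterm, ← mul_assoc]
  rw [← Finset.sum_mul, sum_aeval_P_mul (s := fun n => πEpush (h ^ n)) hr hlow htop hi hl,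
    ite_mul, one_mul, zero_mul]

theorem pullback_blowupMap (hcomm : ∀ a, iEpull (πpull a) = πEpull (ιpull a))
    (hself : ∀ e, iEpull (iEpush e) = h * e) (α : RX) (β : ℕ → RY) :
    iEpull (blowupMap r πpull iEpush πEpull h α β) =
      πEpull (ιpull α) + ∑ l ∈ Finset.Icc 1 (r - 1), h ^ l * πEpull (β l) := by
  rw [blowupMap, map_add, map_sum, hcomm]
  congr 1
  refine Finset.sum_congr rfl fun l hl => ?_
  rw [hself, ← mul_assoc, mul_pow_sub_one (Nat.one_le_iff_ne_zero.1 (Finset.mem_Icc.1 hl).1)]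

theorem pushforward_blowupMap (hleft : ∀ a, πpush (πpull a) = a)
    (projE : ∀ (c : RY) (e : RE), πEpush (πEpull c * e) = c * πEpush e)
    (hpushcomm : ∀ e, πpush (iEpush e) = ιpush (πEpush e))
    (hlow : ∀ m < r - 1, πEpush (h ^ m) = 0) (α : RX) (β : ℕ → RY) :
    πpush (blowupMap r πpull iEpush πEpull h α β) = α := by
  rw [blowupMap, map_add, hleft, map_sum, Finset.sum_eq_zero, add_zero]
  intro l hl
  rw [Finset.mem_Icc] at hl
  rw [hpushcomm, mul_comm, projE, hlow (l - 1) (by omega), mul_zero, map_zero]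

theorem projBundleCoeff_pullback_blowupMap (hr : 0 < r)
    (projE : ∀ (c : RY) (e : RE), πEpush (πEpull c * e) = c * πEpush e)
    (hcomm : ∀ a, iEpull (πpull a) = πEpull (ιpull a))
    (hself : ∀ e, iEpull (iEpush e) = h * e)
    (hlow : ∀ m < r - 1, πEpush (h ^ m) = 0) (htop : πEpush (h ^ (r - 1)) = (-1) ^ (r - 1))
    (α : RX) (β : ℕ → RY) {i : ℕ} (hi : 1 ≤ i) (hir : i ≤ r - 1) :
    projBundleCoeff r πEpush h i (iEpull (blowupMap r πpull iEpush πEpull h α β)) = β i := by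
  have hcoeff {l : ℕ} (hl : l ≤ r - 1) (c : RY) :
      projBundleCoeff r πEpush h i (h ^ l * πEpull c) = if l = i then c else 0 :=
    projBundleCoeff_pow_mul hr projE hlow htop hir hl c
  have hbase : projBundleCoeff r πEpush h i (πEpull (ιpull α)) = 0 := by
    simpa [(Nat.one_le_iff_ne_zero.1 hi).symm] using hcoeff (Nat.zero_le _) (ιpull α)
  rw [pullback_blowupMap hcomm hself, map_add, hbase, zero_add, map_sum,
    Finset.sum_congr rfl fun l hl => hcoeff (Finset.mem_Icc.1 hl).2 (β l),
    Finset.sum_ite_eq', if_pos (Finset.mem_Icc.2 ⟨hi, hir⟩)]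

theorem stmt4_general (hr : 0 < r) (hleft : ∀ a, πpush (πpull a) = a)
    (projE : ∀ (c : RY) (e : RE), πEpush (πEpull c * e) = c * πEpush e)
    (hcomm : ∀ a, iEpull (πpull a) = πEpull (ιpull a))
    (hself : ∀ e, iEpull (iEpush e) = h * e)
    (hpushcomm : ∀ e, πpush (iEpush e) = ιpush (πEpush e))
    (hlow : ∀ m < r - 1, πEpush (h ^ m) = 0) (htop : πEpush (h ^ (r - 1)) = (-1) ^ (r - 1))
    (α : RX) (β : ℕ → RY) :
    πpush (blowupMap r πpull iEpush πEpull h α β) = α ∧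
      ∀ i, 1 ≤ i → i ≤ r - 1 →
        projBundleCoeff r πEpush h i (iEpull (blowupMap r πpull iEpush πEpull h α β)) = β i :=
  ⟨pushforward_blowupMap hleft projE hpushcomm hlow α β, fun _ hi hir =>
    projBundleCoeff_pullback_blowupMap hr projE hcomm hself hlow htop α β hi hir⟩

end BlowUp

/-- Abstract algebraic content of the inverse of the blowup formula
(Theorem 2.4(2)).  With `ψ(α, β_1, …, β_{r-1}) = π^*(α) + ∑_{i=1}^{r-1}
i_{E*}(h^{i-1}·π_E^*(β_i))`, one has `π_*(ψ(α,β)) = α` and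
`G_E^{-i}(i_E^*(ψ(α,β))) = β_i` for `1 ≤ i ≤ r-1`. -/
theorem stmt4 (r : ℕ) (hr : 2 ≤ r)
    {RXt RX RY RE : Type*} [CommRing RXt] [CommRing RX] [CommRing RY] [CommRing RE]
    (πpull : RX →+* RXt) (iEpull : RXt →+* RE) (πEpull : RY →+* RE) (ιpull : RX →+* RY)
    (πpush : RXt →+ RX) (πEpush : RE →+ RY) (iEpush : RE →+ RXt) (ιpush : RY →+ RX)
    (proj : ∀ (a : RX) (b : RXt), πpush (πpull a * b) = a * πpush b)
    (projE : ∀ (c : RY) (e : RE), πEpush (πEpull c * e) = c * πEpush e)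
    (hone : πpush 1 = 1)
    (hcomm : ∀ a : RX, iEpull (πpull a) = πEpull (ιpull a))
    (h : RE)
    (hself : ∀ e : RE, iEpull (iEpush e) = h * e)
    (hpushcomm : ∀ e : RE, πpush (iEpush e) = ιpush (πEpush e))
    (hlow : ∀ i : ℕ, i < r - 1 → πEpush (h ^ i) = 0)
    (htop : πEpush (h ^ (r - 1)) = (-1) ^ (r - 1))
    (α : RX) (β : ℕ → RY) :
    πpush (πpull α + ∑ i ∈ Finset.Icc 1 (r - 1), iEpush (h ^ (i - 1) * πEpull (β i))) = α ∧
    ∀ i : ℕ, 1 ≤ i → i ≤ r - 1 →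
      ∑ j ∈ Finset.range (r - 1 - i + 1),
          MvPolynomial.aeval (R := ℤ) (fun k => πEpush (h ^ (r - 1 + k))) (P r (i + j)) *
            πEpush (h ^ j *
              iEpull (πpull α +
                ∑ l ∈ Finset.Icc 1 (r - 1), iEpush (h ^ (l - 1) * πEpull (β l)))) = β i := by
  have hleft (a : RX) : πpush (πpull a) = a := by simpa [hone] using proj a 1
  exact stmt4_general (πpull := πpull.toAddMonoidHom) (iEpull := iEpull.toAddMonoidHom)
    (πEpull := πEpull.toAddMonoidHom) (ιpull := ιpull.toAddMonoidHom) (by omega) hleft projE hcomm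
    hself hpushcomm hlow htop α β
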